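/- Let s, d be positive integers. For u ∈ W^{s,2}(𝕋ᵈ) with ∇u ∈ L^∞(𝕋ᵈ) and v ∈ W^{s-1,2}(𝕋ᵈ) ∩ L^∞(𝕋ᵈ), and any multi-index α with |α| ≤ s, the commutator estimate ‖∂^α(uv) - u ∂^α v‖_{L²} ≤ c(s,d)(‖∇u‖_{L^∞} ‖∇^{s-1} v‖_{L²} + ‖v‖_{L^∞} ‖∇^s u‖_{L²}) holds. -/

import Mathlib

open Set MeasureTheory
open scoped ENNReal

/-- A function on `ℝᵈ` is `ℤᵈ`-periodic (representing a function on the flat torus `𝕋ᵈ`). -/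
def IsTorusPeriodic {d : ℕ} {X : Type*} (u : EuclideanSpace ℝ (Fin d) → X) : Prop :=
  ∀ (x : EuclideanSpace ℝ (Fin d)) (k : Fin d → ℤ),
    u (x + (WithLp.equiv 2 (Fin d → ℝ)).symm (fun i => (k i : ℝ))) = u x

/-- A fundamental domain `[0,1)ᵈ` of the flat torus `𝕋ᵈ`. -/
def TorusDomain (d : ℕ) : Set (EuclideanSpace ℝ (Fin d)) :=
  {x | ∀ i, x i ∈ Set.Ico (0 : ℝ) 1}

namespace Torus

variable {d : ℕ}

/-- The standard basis of `ℝᵈ`. -/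
noncomputable def stdBasis (d : ℕ) : Module.Basis (Fin d) ℝ (EuclideanSpace ℝ (Fin d)) :=
  (EuclideanSpace.basisFun (Fin d) ℝ).toBasis

lemma fundamentalDomain_stdBasis : ZSpan.fundamentalDomain (stdBasis d) = TorusDomain d := by
  ext x
  simp [ZSpan.mem_fundamentalDomain, stdBasis, TorusDomain]

lemma isAddFundamentalDomain :
    IsAddFundamentalDomain (Submodule.span ℤ (Set.range (stdBasis d))) (TorusDomain d) volume := by
  rw [← fundamentalDomain_stdBasis]
  exact ZSpan.isAddFundamentalDomain _ _

instance : VAddInvariantMeasure (Submodule.span ℤ (Set.range (stdBasis d)))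
    (EuclideanSpace ℝ (Fin d)) volume :=
  inferInstanceAs (VAddInvariantMeasure
    (Submodule.span ℤ (Set.range (stdBasis d))).toAddSubgroup _ _)

instance : Fact (volume (TorusDomain d) < ⊤) := by
  refine ⟨?_⟩
  rw [← fundamentalDomain_stdBasis]
  exact (ZSpan.fundamentalDomain_isBounded (stdBasis d)).measure_lt_top

lemma vadd_eq_of_periodic {X : Type*} {f : EuclideanSpace ℝ (Fin d) → X} (hf : IsTorusPeriodic f)
    (g : Submodule.span ℤ (Set.range (stdBasis d))) (x : EuclideanSpace ℝ (Fin d)) :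
    f (g +ᵥ x) = f x := by
  have h := (Module.Basis.mem_span_iff_repr_mem ℤ (stdBasis d) g.1).1 g.2
  choose k hk using h
  rw [← hf x k]
  congr 1
  change g.1 + x = _
  rw [add_comm]
  congr 1
  ext i
  simpa [stdBasis] using (hk i).symm

lemma exists_bound {F : Type*} [NormedAddCommGroup F] {f : EuclideanSpace ℝ (Fin d) → F}
    (hc : Continuous f) (hf : IsTorusPeriodic f) : ∃ C, ∀ x, ‖f x‖ ≤ C := by
  have hb := (ZSpan.fundamentalDomain_isBounded (stdBasis d)).isCompact_closure
  obtain ⟨C, hC⟩ := hb.exists_bound_of_continuousOn hc.continuousOn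
  refine ⟨C, fun x => ?_⟩
  rw [← vadd_eq_of_periodic hf (-ZSpan.floor (stdBasis d) x) x]
  refine hC _ (subset_closure ?_)
  exact (ZSpan.vadd_mem_fundamentalDomain (stdBasis d) _ x).2 rfl

lemma lintegral_add_right {f : EuclideanSpace ℝ (Fin d) → ℝ≥0∞} (hf : IsTorusPeriodic f)
    (a : EuclideanSpace ℝ (Fin d)) :
    ∫⁻ x in TorusDomain d, f (x + a) = ∫⁻ x in TorusDomain d, f x := by
  have h1 := (isAddFundamentalDomain (d := d)).vadd_of_comm a
  rw [(isAddFundamentalDomain (d := d)).setLIntegral_eq h1 f (vadd_eq_of_periodic hf)]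
  have := (measurePreserving_vadd a (volume : Measure (EuclideanSpace ℝ (Fin d)))
    ).setLIntegral_comp_emb (measurableEmbedding_const_vadd a) f (TorusDomain d)
  rw [Set.image_vadd] at this
  simpa [add_comm] using this

lemma integral_add_right {f : EuclideanSpace ℝ (Fin d) → ℝ} (hf : IsTorusPeriodic f)
    (a : EuclideanSpace ℝ (Fin d)) :
    ∫ x in TorusDomain d, f (x + a) = ∫ x in TorusDomain d, f x := by
  have h1 := (isAddFundamentalDomain (d := d)).vadd_of_comm a
  rw [(isAddFundamentalDomain (d := d)).setIntegral_eq h1 (vadd_eq_of_periodic hf)]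
  have := (measurePreserving_vadd a (volume : Measure (EuclideanSpace ℝ (Fin d)))
    ).setIntegral_image_emb (measurableEmbedding_const_vadd a) f (TorusDomain d)
  rw [Set.image_vadd] at this
  simpa [add_comm] using this.symm

/-- The `l`-th standard unit vector. -/
noncomputable abbrev unitVec (l : Fin d) : EuclideanSpace ℝ (Fin d) := EuclideanSpace.single l 1

lemma periodic_unitVec {X : Type*} {f : EuclideanSpace ℝ (Fin d) → X} (hf : IsTorusPeriodic f)
    (l : Fin d) (x : EuclideanSpace ℝ (Fin d)) : f (x + unitVec l) = f x := by
  rw [← hf x (Pi.single l 1)]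
  congr 2
  ext i
  by_cases h : i = l
  · subst h; simp
  · simp [h]

lemma memLp_of_periodic {F : Type*} [NormedAddCommGroup F] {f : EuclideanSpace ℝ (Fin d) → F}
    [SecondCountableTopologyEither (EuclideanSpace ℝ (Fin d)) F]
    (hc : Continuous f) (hf : IsTorusPeriodic f) (p : ℝ≥0∞) :
    MemLp f p (volume.restrict (TorusDomain d)) := by
  obtain ⟨C, hC⟩ := exists_bound hc hf
  exact MemLp.of_bound hc.aestronglyMeasurable C (.of_forall hC)

/-- The integral of a directional derivative of a periodic function vanishes. -/
lemma integral_lineDeriv_eq_zero {f f' : EuclideanSpace ℝ (Fin d) → ℝ} (l : Fin d)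
    (hf : IsTorusPeriodic f) (hf' : IsTorusPeriodic f') (hc : Continuous f')
    (hd : ∀ x, HasDerivAt (fun t : ℝ => f (x + t • unitVec l)) (f' x) 0) :
    ∫ x in TorusDomain d, f' x = 0 := by
  have hd' : ∀ x (t : ℝ),
      HasDerivAt (fun t : ℝ => f (x + t • unitVec l)) (f' (x + t • unitVec l)) t := by
    intro x t
    have h := hd (x + t • unitVec l)
    rw [← sub_self t] at h
    simpa only [add_assoc, ← add_smul, add_sub_cancel] using h.comp_sub_const t t
  have hz : ∀ x, ∫ t in (0 : ℝ)..1, f' (x + t • unitVec l) = 0 := by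
    intro x
    rw [intervalIntegral.integral_eq_sub_of_hasDerivAt (fun t _ => hd' x t)
      (by apply Continuous.intervalIntegrable; fun_prop)]
    simp [periodic_unitVec hf]
  obtain ⟨C, hC⟩ := exists_bound hc hf'
  have hsw := integral_integral_swap
    (μ := volume.restrict (TorusDomain d)) (ν := volume.restrict (Ioc (0 : ℝ) 1))
    (f := fun x t => f' (x + t • unitVec l)) ?_
  · simp only [intervalIntegral.integral_of_le zero_le_one] at hz
    simp only [hz, integral_add_right hf'] at hsw
    simpa using hsw.symm
  · refine Integrable.of_bound (Continuous.aestronglyMeasurable ?_) C (.of_forall fun _ => hC _)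
    simp only [Function.uncurry_def]
    fun_prop

/-- Poincaré's inequality along the lines in a coordinate direction. -/
lemma eLpNorm_le_eLpNorm_lineDeriv {f f' : EuclideanSpace ℝ (Fin d) → ℝ} (l : Fin d)
    (hf' : IsTorusPeriodic f') (hc : Continuous f')
    (hd : ∀ x (t : ℝ),
      HasDerivAt (fun t : ℝ => f (x + t • unitVec l)) (f' (x + t • unitVec l)) t)
    (hz : ∀ x, ∃ t ∈ Icc (0 : ℝ) 1, f (x + t • unitVec l) = 0) :
    eLpNorm f 2 (volume.restrict (TorusDomain d)) ≤
      eLpNorm f' 2 (volume.restrict (TorusDomain d)) := by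
  have h1 : ∀ x, ‖f x‖ₑ ≤ ∫⁻ t in Ioc (0 : ℝ) 1, ‖f' (x + t • unitVec l)‖ₑ := by
    intro x
    obtain ⟨t, ht, h0⟩ := hz x
    have h := intervalIntegral.integral_eq_sub_of_hasDerivAt (a := 0) (b := t)
      (fun t _ => hd x t) (by apply Continuous.intervalIntegrable; fun_prop)
    rw [h0, zero_smul, add_zero, zero_sub, intervalIntegral.integral_of_le ht.1] at h
    rw [← enorm_neg, ← h]
    exact (enorm_integral_le_lintegral_enorm _).trans
      (lintegral_mono_set (Ioc_subset_Ioc_right ht.2))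
  have : IsProbabilityMeasure (volume.restrict (Ioc (0 : ℝ) 1)) := ⟨by simp⟩
  have h2 : ∀ x, ‖f x‖ₑ ^ (2 : ℝ) ≤ ∫⁻ t in Ioc (0 : ℝ) 1, ‖f' (x + t • unitVec l)‖ₑ ^ (2 : ℝ) := by
    intro x
    have h := eLpNorm_le_eLpNorm_of_exponent_le (μ := volume.restrict (Ioc (0 : ℝ) 1))
      (f := fun t : ℝ => f' (x + t • unitVec l)) (p := 1) (q := 2) (by norm_num)
      (Continuous.aestronglyMeasurable (by fun_prop))
    rw [eLpNorm_one_eq_lintegral_enorm,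
      eLpNorm_eq_lintegral_rpow_enorm_toReal (by norm_num) (by norm_num)] at h
    have h := ENNReal.rpow_le_rpow ((h1 x).trans h) (z := 2) (by norm_num)
    rw [← ENNReal.rpow_mul] at h
    simpa using h
  rw [eLpNorm_eq_lintegral_rpow_enorm_toReal (by norm_num) (by norm_num),
    eLpNorm_eq_lintegral_rpow_enorm_toReal (by norm_num) (by norm_num)]
  refine ENNReal.rpow_le_rpow ?_ (by simp)
  simp only [ENNReal.toReal_ofNat]
  refine (lintegral_mono h2).trans ?_
  rw [lintegral_lintegral_swap]
  · have hp : IsTorusPeriodic fun x => ‖f' x‖ₑ ^ (2 : ℝ) := fun x k => by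
      simp only [hf' x k]
    simp only [lintegral_add_right hp]
    simp
  · refine Continuous.aemeasurable ?_
    simp only [Function.uncurry_def]
    refine (ENNReal.continuous_rpow_const).comp ?_
    fun_prop

/-- Smooth periodic functions. -/
def SmoothPeriodic (f : EuclideanSpace ℝ (Fin d) → ℝ) : Prop :=
  ContDiff ℝ (⊤ : ℕ∞) f ∧ IsTorusPeriodic f

/-- The partial derivative in the `l`-th coordinate. -/
noncomputable def pderiv (l : Fin d) (f : EuclideanSpace ℝ (Fin d) → ℝ) :
    EuclideanSpace ℝ (Fin d) → ℝ := fun x => fderiv ℝ f x (unitVec l)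

/-- The iterated partial derivative along a list of coordinates; the head is applied last. -/
noncomputable def iterPderiv (L : List (Fin d)) (f : EuclideanSpace ℝ (Fin d) → ℝ) :
    EuclideanSpace ℝ (Fin d) → ℝ := L.foldr pderiv f

@[simp] lemma iterPderiv_nil (f : EuclideanSpace ℝ (Fin d) → ℝ) : iterPderiv [] f = f := rfl

@[simp] lemma iterPderiv_cons (l : Fin d) (L : List (Fin d)) (f : EuclideanSpace ℝ (Fin d) → ℝ) :
    iterPderiv (l :: L) f = pderiv l (iterPderiv L f) := rfl

lemma iterPderiv_append (L L' : List (Fin d)) (f : EuclideanSpace ℝ (Fin d) → ℝ) :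
    iterPderiv (L ++ L') f = iterPderiv L (iterPderiv L' f) := List.foldr_append

lemma SmoothPeriodic.continuous {f : EuclideanSpace ℝ (Fin d) → ℝ} (hf : SmoothPeriodic f) :
    Continuous f := hf.1.continuous

lemma SmoothPeriodic.differentiable {f : EuclideanSpace ℝ (Fin d) → ℝ} (hf : SmoothPeriodic f) :
    Differentiable ℝ f := hf.1.differentiable (by simp)

lemma SmoothPeriodic.pderiv {f : EuclideanSpace ℝ (Fin d) → ℝ} (hf : SmoothPeriodic f)
    (l : Fin d) : SmoothPeriodic (pderiv l f) := by
  constructor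
  · exact (hf.1.fderiv_right (m := (⊤ : ℕ∞)) (by simp)).clm_apply contDiff_const
  · intro x k
    simp only [Torus.pderiv]
    rw [← fderiv_comp_add_right]
    simp only [hf.2 _ k]

lemma SmoothPeriodic.iterPderiv {f : EuclideanSpace ℝ (Fin d) → ℝ} (hf : SmoothPeriodic f)
    (L : List (Fin d)) : SmoothPeriodic (iterPderiv L f) := by
  induction L with
  | nil => exact hf
  | cons l L ih => exact ih.pderiv l

lemma SmoothPeriodic.mul {f g : EuclideanSpace ℝ (Fin d) → ℝ} (hf : SmoothPeriodic f)
    (hg : SmoothPeriodic g) : SmoothPeriodic (fun x => f x * g x) :=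
  ⟨hf.1.mul hg.1, fun x k => by simp only [hf.2 x k, hg.2 x k]⟩

lemma SmoothPeriodic.memLp {f : EuclideanSpace ℝ (Fin d) → ℝ} (hf : SmoothPeriodic f) (p : ℝ≥0∞) :
    MemLp f p (volume.restrict (TorusDomain d)) :=
  memLp_of_periodic hf.continuous hf.2 p

lemma pderiv_mul {f g : EuclideanSpace ℝ (Fin d) → ℝ} (hf : SmoothPeriodic f)
    (hg : SmoothPeriodic g) (l : Fin d) :
    pderiv l (fun x => f x * g x) = fun x => pderiv l f x * g x + f x * pderiv l g x := by
  funext x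
  simp only [pderiv]
  rw [fderiv_fun_mul (hf.differentiable x) (hg.differentiable x)]
  simp
  ring

lemma SmoothPeriodic.hasDerivAt_line {f : EuclideanSpace ℝ (Fin d) → ℝ} (hf : SmoothPeriodic f)
    (l : Fin d) (x : EuclideanSpace ℝ (Fin d)) (t : ℝ) :
    HasDerivAt (fun t : ℝ => f (x + t • unitVec l)) (Torus.pderiv l f (x + t • unitVec l)) t := by
  have h1 : HasDerivAt (fun t : ℝ => x + t • unitVec l) (unitVec l) t := by
    simpa using ((hasDerivAt_id t).smul_const (unitVec l)).const_add x
  exact (hf.differentiable _).hasFDerivAt.comp_hasDerivAt t h1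

lemma SmoothPeriodic.exists_pderiv_eq_zero {f : EuclideanSpace ℝ (Fin d) → ℝ}
    (hf : SmoothPeriodic f) (l : Fin d) (x : EuclideanSpace ℝ (Fin d)) :
    ∃ t ∈ Icc (0 : ℝ) 1, Torus.pderiv l f (x + t • unitVec l) = 0 := by
  obtain ⟨t, ht, h⟩ := exists_hasDerivAt_eq_zero (zero_lt_one' ℝ)
    (f := fun t : ℝ => f (x + t • unitVec l))
    (fun t _ => (hf.hasDerivAt_line l x t).continuousAt.continuousWithinAt)
    (by simp [periodic_unitVec hf.2]) (fun t _ => hf.hasDerivAt_line l x t)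
  exact ⟨t, Ioo_subset_Icc_self ht, h⟩

/-- Poincaré's inequality for the product of a partial derivative with another function. -/
lemma eLpNorm_pderiv_mul_le {f g : EuclideanSpace ℝ (Fin d) → ℝ} (hf : SmoothPeriodic f)
    (hg : SmoothPeriodic g) (l : Fin d) :
    eLpNorm (fun x => pderiv l f x * g x) 2 (volume.restrict (TorusDomain d)) ≤
      eLpNorm (pderiv l fun x => pderiv l f x * g x) 2 (volume.restrict (TorusDomain d)) := by
  have h := (hf.pderiv l).mul hg
  refine eLpNorm_le_eLpNorm_lineDeriv l (h.pderiv l).2 (h.pderiv l).continuous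
    (h.hasDerivAt_line l) fun x => ?_
  obtain ⟨t, ht, h0⟩ := hf.exists_pderiv_eq_zero l x
  exact ⟨t, ht, by simp [h0]⟩

lemma eLpNorm_pderiv_le {f : EuclideanSpace ℝ (Fin d) → ℝ} (hf : SmoothPeriodic f) (l : Fin d) :
    eLpNorm (pderiv l f) 2 (volume.restrict (TorusDomain d)) ≤
      eLpNorm (pderiv l (pderiv l f)) 2 (volume.restrict (TorusDomain d)) := by
  have h := hf.pderiv l
  exact eLpNorm_le_eLpNorm_lineDeriv l (h.pderiv l).2 (h.pderiv l).continuous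
    (h.hasDerivAt_line l) fun x => hf.exists_pderiv_eq_zero l x

/-- The commutator of an iterated partial derivative with multiplication by `u`, expanded by the
Leibniz rule. -/
lemma exists_commutator_terms (L : List (Fin d)) :
    ∃ T : List (List (Fin d) × List (Fin d)),
      (∀ p ∈ T, p.1 ≠ [] ∧ p.1.length + p.2.length = L.length) ∧
      ∀ u v : EuclideanSpace ℝ (Fin d) → ℝ, SmoothPeriodic u → SmoothPeriodic v → ∀ x,
        iterPderiv L (fun y => u y * v y) x =
          u x * iterPderiv L v x + (T.map fun p => iterPderiv p.1 u x * iterPderiv p.2 v x).sum := by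
  induction L with
  | nil => exact ⟨[], by simp, by simp⟩
  | cons l L ih =>
    obtain ⟨T, hT, h⟩ := ih
    have key : ∀ (T : List (List (Fin d) × List (Fin d)))
        (u v : EuclideanSpace ℝ (Fin d) → ℝ), SmoothPeriodic u → SmoothPeriodic v →
        SmoothPeriodic (fun x => (T.map fun p => iterPderiv p.1 u x * iterPderiv p.2 v x).sum) ∧
        pderiv l (fun x => (T.map fun p => iterPderiv p.1 u x * iterPderiv p.2 v x).sum) =
        fun x => ((T.flatMap fun p => [(l :: p.1, p.2), (p.1, l :: p.2)]).map
          fun p => iterPderiv p.1 u x * iterPderiv p.2 v x).sum := by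
      intro T u v hu hv
      induction T with
      | nil =>
        refine ⟨⟨contDiff_const, fun _ _ => rfl⟩, ?_⟩
        funext x
        simp [pderiv]
      | cons p T ih =>
        have hp := (hu.iterPderiv p.1).mul (hv.iterPderiv p.2)
        refine ⟨⟨?_, ?_⟩, ?_⟩
        · simpa using hp.1.add ih.1.1
        · intro x k
          simp only [List.map_cons, List.sum_cons]
          simp only [(hu.iterPderiv _).2 x k, (hv.iterPderiv _).2 x k]
        · funext x
          have h1 := congrFun ih.2 x
          have h2 := congrFun (pderiv_mul (hu.iterPderiv p.1) (hv.iterPderiv p.2) l) x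
          simp only [pderiv] at h1 h2
          simp only [pderiv, List.map_cons, List.sum_cons]
          rw [fderiv_fun_add (hp.differentiable x) (ih.1.differentiable x)]
          simp only [add_apply, h1, h2, List.flatMap_cons, List.map_append,
            List.sum_append]
          simp [pderiv]
    refine ⟨([l], L) :: T.flatMap fun p => [(l :: p.1, p.2), (p.1, l :: p.2)], ?_, ?_⟩
    · intro p hp
      simp only [List.mem_cons, List.mem_flatMap, List.not_mem_nil, or_false] at hp
      rcases hp with rfl | ⟨q, hq, rfl | rfl⟩
      · simp [add_comm]
      · have := (hT q hq).2
        simp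
        omega
      · have := hT q hq
        simp [this.1]
        omega
    · intro u v hu hv x
      have hv' := hv.iterPderiv L
      have e : iterPderiv L (fun y => u y * v y) = fun x => u x * iterPderiv L v x +
          (T.map fun p => iterPderiv p.1 u x * iterPderiv p.2 v x).sum := funext (h u v hu hv)
      have h1 := congrFun (key T u v hu hv).2 x
      have h2 := congrFun (pderiv_mul hu hv' l) x
      rw [iterPderiv_cons, e]
      simp only [pderiv] at h1 h2
      simp only [pderiv, List.map_cons, List.sum_cons, iterPderiv_cons, iterPderiv_nil]
      rw [fderiv_fun_add ((hu.mul hv').differentiable x) ((key T u v hu hv).1.differentiable x)]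
      simp only [add_apply, h1, h2]
      ring

lemma hasDerivAt_abs_rpow_mul_self {a : ℝ} (ha : 0 < a) (t : ℝ) :
    HasDerivAt (fun t : ℝ => |t| ^ a * t) ((a + 1) * |t| ^ a) t := by
  rcases eq_or_ne t 0 with rfl | ht
  · rw [hasDerivAt_iff_tendsto_slope]
    have h0 : (a + 1) * |(0 : ℝ)| ^ a = |(0 : ℝ)| ^ a := by simp [Real.zero_rpow ha.ne']
    rw [h0]
    have hc : Continuous fun t : ℝ => |t| ^ a := continuous_abs.rpow_const fun _ => .inr ha.le
    refine ((hc.tendsto 0).mono_left nhdsWithin_le_nhds).congr' ?_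
    filter_upwards [self_mem_nhdsWithin] with t ht
    have ht : t ≠ 0 := ht
    simp [slope_def_field, ht]
  · have h1 : HasDerivAt (fun t : ℝ => |t| ^ a) _ t :=
      (hasDerivAt_abs ht).rpow_const (.inl (abs_ne_zero.2 ht))
    refine (h1.fun_mul (hasDerivAt_id' t)).congr_deriv ?_
    have h2 : |t| ^ a = |t| ^ (a - 1) * |t| := by
      rw [← Real.rpow_add_one (abs_ne_zero.2 ht)]; simp
    have h3 : (SignType.sign t : ℝ) * t = |t| := sign_mul_self t
    linear_combination a * |t| ^ (a - 1) * h3 - a * h2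

/-- The one-step Gagliardo–Nirenberg inequality in a coordinate direction. -/
lemma eLpNorm_pderiv_sq_le {g : EuclideanSpace ℝ (Fin d) → ℝ} (hg : SmoothPeriodic g) (l : Fin d)
    {p : ℝ} (hp : 2 < p) {q r : ℝ≥0∞} (hqr : q⁻¹ + r⁻¹ = ENNReal.ofReal (2 / p)) :
    eLpNorm (pderiv l g) (ENNReal.ofReal p) (volume.restrict (TorusDomain d)) ^ 2 ≤
      ENNReal.ofReal (p - 1) * (eLpNorm g q (volume.restrict (TorusDomain d)) *
        eLpNorm (pderiv l (pderiv l g)) r (volume.restrict (TorusDomain d))) := by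
  set μ := volume.restrict (TorusDomain d) with hμ
  set h := pderiv l g with hh
  have sh : SmoothPeriodic h := hg.pderiv l
  set k := pderiv l h with hk
  have sk : SmoothPeriodic k := sh.pderiv l
  obtain ⟨a, rfl⟩ : ∃ a, p = a + 2 := ⟨p - 2, by ring⟩
  have ha : 0 < a := by linarith
  have hca : Continuous fun x => |h x| ^ a := sh.continuous.abs.rpow_const fun _ => .inr ha.le
  have cg := hg.continuous
  have ch := sh.continuous
  have ck := sk.continuous
  set A : EuclideanSpace ℝ (Fin d) → ℝ := fun x => h x * (|h x| ^ a * h x) with hA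
  set B : EuclideanSpace ℝ (Fin d) → ℝ := fun x => g x * ((a + 1) * |h x| ^ a * k x) with hB
  have pA : IsTorusPeriodic A := fun x n => by simp only [hA, sh.2 x n]
  have pB : IsTorusPeriodic B := fun x n => by simp only [hB, sh.2 x n, hg.2 x n, sk.2 x n]
  have cA : Continuous A := by fun_prop
  have cB : Continuous B := by fun_prop
  have ibp : ∫ x, A x + B x ∂μ = 0 := by
    refine integral_lineDeriv_eq_zero l (f := fun x => g x * (|h x| ^ a * h x)) (fun x n => ?_)
      (fun x n => ?_) (cA.add cB) fun x => ?_
    · simp only [sh.2 x n, hg.2 x n]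
    · simp only [pA x n, pB x n]
    · have h1 := hg.hasDerivAt_line l x 0
      have h2 := (hasDerivAt_abs_rpow_mul_self ha _).comp 0 (sh.hasDerivAt_line l x 0)
      have h3 := h1.mul h2
      simpa [hA, hB, Function.comp_def, Pi.mul_def] using h3
  have iA : Integrable A μ := memLp_one_iff_integrable.1 (memLp_of_periodic cA pA 1)
  have iB : Integrable B μ := memLp_one_iff_integrable.1 (memLp_of_periodic cB pB 1)
  rw [integral_add iA iB] at ibp
  have hAabs : ∀ x, A x = |h x| ^ (a + 2) := by
    intro x
    rw [Real.rpow_add_of_nonneg (abs_nonneg _) ha.le (by norm_num)]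
    simp [hA]
    ring
  have e1 : eLpNorm h (ENNReal.ofReal (a + 2)) μ ^ (a + 2) = ‖∫ x, A x ∂μ‖ₑ := by
    rw [Real.enorm_of_nonneg (integral_nonneg fun x => by simp only [hAabs]; positivity),
      ofReal_integral_eq_lintegral_ofReal iA (.of_forall fun x => by simp only [hAabs]; positivity),
      eLpNorm_eq_lintegral_rpow_enorm_toReal (by simp; linarith) (by simp),
      ENNReal.toReal_ofReal (by linarith), ← ENNReal.rpow_mul, one_div_mul_cancel (by linarith),
      ENNReal.rpow_one]
    refine lintegral_congr fun x => ?_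
    rw [hAabs, ← Real.norm_eq_abs, ← ENNReal.ofReal_rpow_of_nonneg (norm_nonneg _) (by linarith),
      ofReal_norm]
  have ht1 : ENNReal.HolderTriple q r (ENNReal.ofReal ((a + 2) / 2)) := by
    refine ⟨?_⟩
    rw [hqr, ← ENNReal.ofReal_inv_of_pos (by positivity), inv_div]
  have ht2 : ENNReal.HolderTriple (ENNReal.ofReal ((a + 2) / a))
      (ENNReal.ofReal ((a + 2) / 2)) 1 := by
    refine ⟨?_⟩
    rw [← ENNReal.ofReal_inv_of_pos (by positivity), ← ENNReal.ofReal_inv_of_pos (by positivity),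
      ← ENNReal.ofReal_add (by positivity) (by positivity), inv_one, ← ENNReal.ofReal_one]
    congr 1
    field_simp
  have e2 : ‖∫ x, B x ∂μ‖ₑ ≤ ENNReal.ofReal (a + 1) *
      (eLpNorm h (ENNReal.ofReal (a + 2)) μ ^ a * (eLpNorm g q μ * eLpNorm k r μ)) := by
    refine (enorm_integral_le_lintegral_enorm _).trans ?_
    rw [← eLpNorm_one_eq_lintegral_enorm]
    have e3 : B = (a + 1) • ((fun x => ‖h x‖ ^ a) • (g • k)) := by
      funext x
      simp [hB]
      ring
    rw [e3, eLpNorm_const_smul, Real.enorm_of_nonneg (by linarith)]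
    gcongr
    refine (eLpNorm_smul_le_mul_eLpNorm (p := ENNReal.ofReal ((a + 2) / a))
      (q := ENNReal.ofReal ((a + 2) / 2)) (cg.smul ck).aestronglyMeasurable
      (by simpa using hca.aestronglyMeasurable)).trans ?_
    refine mul_le_mul' (le_of_eq ?_)
      (eLpNorm_smul_le_mul_eLpNorm (p := q) (q := r) ck.aestronglyMeasurable
        cg.aestronglyMeasurable)
    rw [eLpNorm_norm_rpow _ ha, ← ENNReal.ofReal_mul (by positivity), div_mul_cancel₀ _ ha.ne']
  have e4 : ‖∫ x, A x ∂μ‖ₑ = ‖∫ x, B x ∂μ‖ₑ := by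
    rw [eq_neg_of_add_eq_zero_left ibp, enorm_neg]
  rw [← e4, ← e1] at e2
  have fin := (sh.memLp (ENNReal.ofReal (a + 2))).eLpNorm_ne_top
  rw [← hμ] at fin
  generalize eLpNorm h (ENNReal.ofReal (a + 2)) μ = X at *
  rcases eq_or_ne X 0 with rfl | h0
  · simp
  rw [ENNReal.rpow_add _ _ h0 fin, mul_left_comm,
    ENNReal.mul_le_mul_iff_right (by simp [h0, fin]) (by simp [h0, fin])] at e2
  convert e2 using 2
  · norm_cast
  · ring_nf

/-- A nearly log-convex finite sequence is controlled by its end points. -/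
lemma le_of_sq_le_mul {c : ℕ → ℝ≥0∞} {m : ℕ} {K : ℝ≥0∞} (hK : 1 ≤ K) (hKt : K ≠ ⊤)
    (hc : ∀ i, c i ≠ ⊤) (h : ∀ i, i + 1 < m → c (i + 1) ^ 2 ≤ K * (c i * c (i + 2)))
    {i : ℕ} (hi : i ≤ m) : c i ≤ K ^ m ^ 2 * (c 0 + c m) := by
  set b : ℕ → ℝ≥0∞ := fun i => K ^ i ^ 2 * c i with hb
  have hbt : ∀ i, b i ≠ ⊤ := fun i => ENNReal.mul_ne_top (ENNReal.pow_ne_top hKt) (hc i)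
  have hbc : ∀ i, i + 1 < m → b (i + 1) ^ 2 ≤ b i * b (i + 2) := by
    intro i hi
    calc b (i + 1) ^ 2 = K ^ (2 * (i + 1) ^ 2) * c (i + 1) ^ 2 := by simp only [hb]; ring
      _ ≤ K ^ (2 * (i + 1) ^ 2) * (K * (c i * c (i + 2))) := by gcongr; exact h i hi
      _ = K ^ (2 * (i + 1) ^ 2 + 1) * (c i * c (i + 2)) := by ring
      _ ≤ K ^ (i ^ 2 + (i + 2) ^ 2) * (c i * c (i + 2)) := by
        refine mul_le_mul' (pow_le_pow_right₀ hK ?_) le_rfl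
        nlinarith
      _ = b i * b (i + 2) := by simp only [hb]; ring
  have key : ∀ i ≤ m, b i ≤ max (b 0) (b m) := by
    have hex : ∃ i, i ≤ m ∧ ∀ j ≤ m, b j ≤ b i := by
      obtain ⟨i, hi, h⟩ := Finset.exists_max_image (Finset.range (m + 1)) b ⟨0, by simp⟩
      exact ⟨i, by simpa [Nat.lt_succ_iff] using hi,
        fun j hj => h j (by simpa [Nat.lt_succ_iff] using hj)⟩
    classical
    obtain ⟨him, hmax⟩ := Nat.find_spec hex
    have hmin := fun j => Nat.find_min hex (m := j)
    generalize Nat.find hex = n at *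
    intro i hi
    refine (hmax i hi).trans ?_
    rcases Nat.eq_zero_or_pos n with rfl | hn
    · exact le_max_left _ _
    rcases him.eq_or_lt with rfl | hnm
    · exact le_max_right _ _
    exfalso
    obtain ⟨n, rfl⟩ : ∃ k, n = k + 1 := ⟨n - 1, by omega⟩
    refine hmin n (by omega) ⟨by omega, fun j hj => (hmax j hj).trans ?_⟩
    rcases eq_or_ne (b (n + 1)) 0 with h0 | h0
    · simp [h0]
    have h1 := (hbc n hnm).trans (mul_le_mul_right (hmax (n + 2) (by omega)) _)
    rw [sq] at h1
    exact (ENNReal.mul_le_mul_iff_left h0 (hbt _)).1 h1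
  calc c i ≤ b i := le_mul_of_one_le_left' (one_le_pow₀ hK)
    _ ≤ max (b 0) (b m) := key i hi
    _ ≤ b 0 + b m := max_le le_self_add le_add_self
    _ ≤ K ^ m ^ 2 * c 0 + K ^ m ^ 2 * c m := by
      gcongr
      simpa [hb] using le_mul_of_one_le_left' (one_le_pow₀ hK)
    _ = K ^ m ^ 2 * (c 0 + c m) := by ring

/-- The largest `L^q` norm of the iterated partial derivatives of order `n`. -/
noncomputable def lpSup (f : EuclideanSpace ℝ (Fin d) → ℝ) (q : ℝ≥0∞) (n : ℕ) : ℝ≥0∞ :=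
  ⨆ L : List.Vector (Fin d) n, eLpNorm (iterPderiv L.1 f) q (volume.restrict (TorusDomain d))

lemma eLpNorm_le_lpSup (f : EuclideanSpace ℝ (Fin d) → ℝ) (q : ℝ≥0∞) {n : ℕ} {L : List (Fin d)}
    (hL : L.length = n) :
    eLpNorm (iterPderiv L f) q (volume.restrict (TorusDomain d)) ≤ lpSup f q n :=
  le_iSup (fun L : List.Vector (Fin d) n =>
    eLpNorm (iterPderiv L.1 f) q (volume.restrict (TorusDomain d))) ⟨L, hL⟩

lemma lpSup_zero (f : EuclideanSpace ℝ (Fin d) → ℝ) (q : ℝ≥0∞) :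
    lpSup f q 0 = eLpNorm f q (volume.restrict (TorusDomain d)) := by
  refine le_antisymm (iSup_le fun L => ?_) (eLpNorm_le_lpSup f q (L := []) rfl)
  rw [List.length_eq_zero_iff.1 L.2, iterPderiv_nil]

lemma lpSup_ne_top {f : EuclideanSpace ℝ (Fin d) → ℝ} (hf : SmoothPeriodic f) (q : ℝ≥0∞) (n : ℕ) :
    lpSup f q n ≠ ⊤ := by
  have h : lpSup f q n ≤ ∑ L : List.Vector (Fin d) n,
      eLpNorm (iterPderiv L.1 f) q (volume.restrict (TorusDomain d)) :=
    iSup_le fun L => Finset.single_le_sum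
      (f := fun L : List.Vector (Fin d) n =>
        eLpNorm (iterPderiv L.1 f) q (volume.restrict (TorusDomain d)))
      (fun _ _ => zero_le) (Finset.mem_univ L)
  exact ne_top_of_le_ne_top
    (ENNReal.sum_ne_top.2 fun L _ => ((hf.iterPderiv L.1).memLp q).eLpNorm_ne_top) h

lemma lpSup_pderiv_le (f : EuclideanSpace ℝ (Fin d) → ℝ) (q : ℝ≥0∞) (n : ℕ) (l : Fin d) :
    lpSup (pderiv l f) q n ≤ lpSup f q (n + 1) := by
  refine iSup_le fun L => ?_
  have := eLpNorm_le_lpSup f q (n := n + 1) (L := L.1 ++ [l]) (by simp [L.2])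
  rwa [iterPderiv_append] at this

lemma lpSup_two_succ_le {f : EuclideanSpace ℝ (Fin d) → ℝ} (hf : SmoothPeriodic f) {n : ℕ}
    (hn : 1 ≤ n) : lpSup f 2 n ≤ lpSup f 2 (n + 1) := by
  refine iSup_le fun ⟨L, hL⟩ => ?_
  match L, hL with
  | [], hL => simp at hL; omega
  | l :: L, hL =>
    exact (eLpNorm_pderiv_le (hf.iterPderiv L) l).trans
      (eLpNorm_le_lpSup f 2 (L := l :: l :: L) (by simpa using hL))

lemma lpSup_two_mono {f : EuclideanSpace ℝ (Fin d) → ℝ} (hf : SmoothPeriodic f) {n m : ℕ}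
    (hn : 1 ≤ n) (hnm : n ≤ m) : lpSup f 2 n ≤ lpSup f 2 m := by
  induction m, hnm using Nat.le_induction with
  | base => exact le_rfl
  | succ m hm ih => exact ih.trans (lpSup_two_succ_le hf (hn.trans hm))

/-- The exponents `2 * m / i` of the Gagliardo–Nirenberg inequality. -/
noncomputable def gnExponent (m i : ℕ) : ℝ≥0∞ := (ENNReal.ofReal (i / (2 * m)))⁻¹

lemma gnExponent_zero (m : ℕ) : gnExponent m 0 = ⊤ := by simp [gnExponent]

lemma gnExponent_self {m : ℕ} (hm : m ≠ 0) : gnExponent m m = 2 := by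
  have h : (m : ℝ) / (2 * m) = 2⁻¹ := by field_simp
  rw [gnExponent, h, ENNReal.ofReal_inv_of_pos (by norm_num), inv_inv]
  simp

lemma lpSup_sq_le {f : EuclideanSpace ℝ (Fin d) → ℝ} (hf : SmoothPeriodic f) {m i : ℕ}
    (hi : i + 1 < m) :
    lpSup f (gnExponent m (i + 1)) (i + 1) ^ 2 ≤
      (2 * m : ℕ) * (lpSup f (gnExponent m i) i * lpSup f (gnExponent m (i + 2)) (i + 2)) := by
  have hm : (0 : ℝ) < m := by exact_mod_cast (by omega : 0 < m)
  have hi' : (i : ℝ) + 1 < m := by exact_mod_cast hi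
  rw [← ENNReal.rpow_natCast, ← ENNReal.le_rpow_inv_iff (by norm_num)]
  refine iSup_le fun ⟨L, hL⟩ => ?_
  rw [ENNReal.le_rpow_inv_iff (by norm_num), ENNReal.rpow_natCast]
  match L, hL with
  | [], hL => simp at hL
  | l :: L, hL =>
    have hp : gnExponent m (i + 1) = ENNReal.ofReal (2 * m / (i + 1)) := by
      rw [gnExponent, ← ENNReal.ofReal_inv_of_pos (by positivity), inv_div]
      push_cast
      rfl
    have hlen : L.length = i := by simpa using hL
    rw [hp]
    refine (eLpNorm_pderiv_sq_le (hf.iterPderiv L) l (q := gnExponent m i)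
      (r := gnExponent m (i + 2)) ?_ ?_).trans ?_
    · rw [lt_div_iff₀ (by positivity)]
      linarith
    · rw [gnExponent, gnExponent, inv_inv, inv_inv,
        ← ENNReal.ofReal_add (by positivity) (by positivity)]
      congr 1
      push_cast
      field_simp
      ring
    · gcongr
      · rw [← ENNReal.ofReal_natCast]
        refine ENNReal.ofReal_le_ofReal ?_
        have : 2 * (m : ℝ) / (i + 1) ≤ 2 * m := div_le_self (by positivity) (by simp)
        push_cast
        linarith
      · exact eLpNorm_le_lpSup f _ hlen
      · exact eLpNorm_le_lpSup f _ (L := l :: l :: L) (by simp [hlen])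

/-- The Moser estimate for products of derivatives of total order `m`. -/
lemma eLpNorm_iterPderiv_mul_le {f g : EuclideanSpace ℝ (Fin d) → ℝ} (hf : SmoothPeriodic f)
    (hg : SmoothPeriodic g) {m : ℕ} (hm : m ≠ 0) {L L' : List (Fin d)}
    (hL : L.length + L'.length = m) :
    eLpNorm (fun x => iterPderiv L f x * iterPderiv L' g x) 2
        (volume.restrict (TorusDomain d)) ≤
      ((2 * m : ℕ) ^ 2) ^ m ^ 2 *
        (eLpNorm f ⊤ (volume.restrict (TorusDomain d)) * lpSup g 2 m +
          lpSup f 2 m * eLpNorm g ⊤ (volume.restrict (TorusDomain d))) := by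
  set c : ℕ → ℝ≥0∞ := fun i => lpSup f (gnExponent m i) i * lpSup g (gnExponent m (m - i)) (m - i)
    with hc
  have h1 : c L.length ≤ ((2 * m : ℕ) ^ 2) ^ m ^ 2 * (c 0 + c m) := by
    refine le_of_sq_le_mul (c := c) (m := m) (i := L.length)
      (one_le_pow₀ (by exact_mod_cast (by omega : 1 ≤ 2 * m)))
      (ENNReal.pow_ne_top (ENNReal.natCast_ne_top _))
      (fun i => ENNReal.mul_ne_top (lpSup_ne_top hf _ _) (lpSup_ne_top hg _ _)) (fun i hi => ?_)
      (by omega)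
    obtain ⟨n, rfl⟩ : ∃ n, m = n + (i + 2) := ⟨m - (i + 2), by omega⟩
    have h2 := lpSup_sq_le hf hi
    have h3 := lpSup_sq_le hg (m := n + (i + 2)) (i := n) (by omega)
    have e1 : n + (i + 2) - i = n + 2 := by omega
    have e2 : n + (i + 2) - (i + 1) = n + 1 := by omega
    have e3 : n + (i + 2) - (i + 2) = n := by omega
    simp only [hc, e1, e2, e3, mul_pow]
    exact (mul_le_mul' h2 h3).trans_eq (by push_cast; ring)
  simp only [hc, Nat.sub_zero, Nat.sub_self, gnExponent_zero, gnExponent_self hm, lpSup_zero] at h1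
  refine le_trans ?_ h1
  have ht : ENNReal.HolderTriple (gnExponent m L.length) (gnExponent m (m - L.length)) 2 := by
    refine ⟨?_⟩
    rw [gnExponent, gnExponent, inv_inv, inv_inv,
      ← ENNReal.ofReal_add (by positivity) (by positivity), Nat.cast_sub (by omega),
      ← gnExponent_self hm, gnExponent, inv_inv]
    congr 1
    ring
  refine (eLpNorm_smul_le_mul_eLpNorm (p := gnExponent m L.length)
    (q := gnExponent m (m - L.length)) (hg.iterPderiv L').continuous.aestronglyMeasurable
    (hf.iterPderiv L).continuous.aestronglyMeasurable).trans ?_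
  have hL' : L'.length = m - L.length := by omega
  exact mul_le_mul' (eLpNorm_le_lpSup _ _ rfl) (eLpNorm_le_lpSup _ _ hL')

lemma norm_unitVec (l : Fin d) : ‖unitVec l‖ = 1 := by simp

lemma norm_pderiv_le (f : EuclideanSpace ℝ (Fin d) → ℝ) (l : Fin d)
    (x : EuclideanSpace ℝ (Fin d)) : ‖pderiv l f x‖ ≤ ‖fderiv ℝ f x‖ := by
  exact ((fderiv ℝ f x).le_opNorm (unitVec l)).trans_eq (by rw [norm_unitVec, mul_one])

lemma iteratedFDeriv_apply_unitVec {f : EuclideanSpace ℝ (Fin d) → ℝ} (hf : SmoothPeriodic f)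
    {n : ℕ} (I : Fin n → Fin d) (x : EuclideanSpace ℝ (Fin d)) :
    iteratedFDeriv ℝ n f x (fun i => unitVec (I i)) = iterPderiv (List.ofFn I) f x := by
  induction n generalizing x with
  | zero => simp
  | succ n ih =>
    have e : iterPderiv (List.ofFn (Fin.tail I)) f =
        fun y => iteratedFDeriv ℝ n f y (fun i => unitVec (Fin.tail I i)) :=
      funext fun y => (ih (Fin.tail I) y).symm
    rw [List.ofFn_succ, iterPderiv_cons, iteratedFDeriv_succ_apply_left]
    change _ = pderiv (I 0) (iterPderiv (List.ofFn (Fin.tail I)) f) x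
    rw [e, pderiv, fderiv_continuousMultilinear_apply_const_apply]
    · rfl
    · exact (hf.1.differentiable_iteratedFDeriv (by exact_mod_cast ENat.natCast_lt_top n)) x

lemma norm_le_sum_unitVec {n : ℕ} (A : EuclideanSpace ℝ (Fin d) [×n]→L[ℝ] ℝ) :
    ‖A‖ ≤ ∑ I : Fin n → Fin d, ‖A fun i => unitVec (I i)‖ := by
  refine ContinuousMultilinearMap.opNorm_le_bound (Finset.sum_nonneg fun _ _ => norm_nonneg _)
    fun m => ?_
  have e : m = fun i => ∑ j, m i j • unitVec j := by
    funext i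
    ext j
    simp [Finset.sum_apply, Pi.single_apply]
  have h : A m = ∑ I : Fin n → Fin d, (∏ i, m i (I i)) * A fun i => unitVec (I i) := by
    conv_lhs => rw [e]
    rw [A.map_sum]
    simp only [A.map_smul_univ, smul_eq_mul]
  rw [h, Finset.sum_mul]
  refine (norm_sum_le _ _).trans (Finset.sum_le_sum fun I _ => ?_)
  rw [norm_mul, mul_comm, norm_prod]
  gcongr with i
  exact PiLp.norm_apply_le (m i) (I i)

lemma lpSup_le_eLpNorm_iteratedFDeriv {f : EuclideanSpace ℝ (Fin d) → ℝ} (hf : SmoothPeriodic f)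
    (q : ℝ≥0∞) (n : ℕ) :
    lpSup f q n ≤ eLpNorm (iteratedFDeriv ℝ n f) q (volume.restrict (TorusDomain d)) := by
  refine iSup_le fun ⟨L, hL⟩ => eLpNorm_mono fun x => ?_
  subst hL
  have h := iteratedFDeriv_apply_unitVec hf L.get x
  rw [List.ofFn_get] at h
  rw [← h]
  refine ((iteratedFDeriv ℝ _ f x).le_opNorm _).trans_eq ?_
  simp

lemma eLpNorm_mul_le_top_left {f g : EuclideanSpace ℝ (Fin d) → ℝ} (hf : SmoothPeriodic f)
    (hg : SmoothPeriodic g) :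
    eLpNorm (fun x => f x * g x) 2 (volume.restrict (TorusDomain d)) ≤
      eLpNorm f ⊤ (volume.restrict (TorusDomain d)) *
        eLpNorm g 2 (volume.restrict (TorusDomain d)) :=
  eLpNorm_smul_le_mul_eLpNorm (f := g) (φ := f) (p := ⊤) (q := 2) (r := 2) hg.continuous.aestronglyMeasurable
    hf.continuous.aestronglyMeasurable

/-- Each term of the commutator satisfies the Moser estimate. -/
lemma exists_eLpNorm_term_le {s : ℕ} {L L' : List (Fin d)} (hL : L ≠ [])
    (hs : L.length + L'.length ≤ s) :
    ∃ K : ℝ≥0∞, K ≠ ⊤ ∧ ∀ u v : EuclideanSpace ℝ (Fin d) → ℝ,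
      SmoothPeriodic u → SmoothPeriodic v →
      eLpNorm (fun x => iterPderiv L u x * iterPderiv L' v x) 2
          (volume.restrict (TorusDomain d)) ≤
        K * (eLpNorm (fderiv ℝ u) ⊤ (volume.restrict (TorusDomain d)) * lpSup v 2 (s - 1) +
          eLpNorm v ⊤ (volume.restrict (TorusDomain d)) * lpSup u 2 s) := by
  obtain ⟨L, l, rfl⟩ : ∃ M l, L = M ++ [l] :=
    ⟨L.dropLast, L.getLast hL, (List.dropLast_append_getLast hL).symm⟩
  simp only [List.length_append, List.length_singleton] at hs
  have hfd : ∀ u : EuclideanSpace ℝ (Fin d) → ℝ,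
      eLpNorm (pderiv l u) ⊤ (volume.restrict (TorusDomain d)) ≤
        eLpNorm (fderiv ℝ u) ⊤ (volume.restrict (TorusDomain d)) :=
    fun u => eLpNorm_mono (norm_pderiv_le u l)
  rcases Nat.eq_zero_or_pos (L.length + L'.length) with h0 | h0
  · obtain ⟨rfl, rfl⟩ : L = [] ∧ L' = [] := by
      constructor <;> exact List.length_eq_zero_iff.1 (by omega)
    refine ⟨1, by simp, fun u v hu hv => ?_⟩
    rw [one_mul]
    simp only [List.nil_append, iterPderiv_cons, iterPderiv_nil]
    have hu' := hu.pderiv l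
    obtain rfl | hs2 : s = 1 ∨ 2 ≤ s := by simp at hs; omega
    · refine (eLpNorm_mul_le_top_left hu' hv).trans (le_add_right ?_)
      rw [Nat.sub_self, lpSup_zero]
      gcongr
      exact hfd u
    · refine (eLpNorm_pderiv_mul_le hu hv l).trans ?_
      rw [pderiv_mul hu' hv]
      refine (eLpNorm_add_le ((hu'.pderiv l).mul hv).continuous.aestronglyMeasurable
        (hu'.mul (hv.pderiv l)).continuous.aestronglyMeasurable (by norm_num)).trans ?_
      rw [add_comm]
      refine add_le_add ((eLpNorm_mul_le_top_left hu' (hv.pderiv l)).trans ?_) ?_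
      · gcongr
        · exact hfd u
        · exact (eLpNorm_le_lpSup v 2 (L := [l]) rfl).trans
            (lpSup_two_mono hv (by simp) (by simp; omega))
      · simp only [mul_comm _ (v _)]
        refine (eLpNorm_mul_le_top_left hv (hu'.pderiv l)).trans ?_
        gcongr
        exact (eLpNorm_le_lpSup u 2 (L := [l, l]) rfl).trans (lpSup_two_mono hu (by simp) hs2)
  · set m := L.length + L'.length with hm
    refine ⟨((2 * m : ℕ) ^ 2) ^ m ^ 2, ?_, fun u v hu hv => ?_⟩
    · exact ENNReal.pow_ne_top (ENNReal.pow_ne_top (ENNReal.natCast_ne_top _))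
    · rw [iterPderiv_append]
      refine (eLpNorm_iterPderiv_mul_le (hu.pderiv l) hv h0.ne' rfl).trans ?_
      refine mul_le_mul_right (add_le_add (mul_le_mul' (hfd u) (lpSup_two_mono hv h0 (by omega)))
        ?_) _
      rw [mul_comm]
      gcongr
      exact (lpSup_pderiv_le u 2 _ l).trans (lpSup_two_mono hu (by omega) (by omega))

lemma exists_eLpNorm_sum_terms_le {s : ℕ} (T : List (List (Fin d) × List (Fin d)))
    (hT : ∀ p ∈ T, p.1 ≠ [] ∧ p.1.length + p.2.length ≤ s) :
    ∃ K : ℝ≥0∞, K ≠ ⊤ ∧ ∀ u v : EuclideanSpace ℝ (Fin d) → ℝ,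
      SmoothPeriodic u → SmoothPeriodic v →
      eLpNorm (fun x => (T.map fun p => iterPderiv p.1 u x * iterPderiv p.2 v x).sum) 2
          (volume.restrict (TorusDomain d)) ≤
        K * (eLpNorm (fderiv ℝ u) ⊤ (volume.restrict (TorusDomain d)) * lpSup v 2 (s - 1) +
          eLpNorm v ⊤ (volume.restrict (TorusDomain d)) * lpSup u 2 s) := by
  induction T with
  | nil => exact ⟨0, by simp, by simp⟩
  | cons p T ih =>
    obtain ⟨K, hK, h⟩ := ih fun p hp => hT p (List.mem_cons_of_mem _ hp)
    obtain ⟨K', hK', h'⟩ := exists_eLpNorm_term_le (hT p List.mem_cons_self).1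
      (hT p List.mem_cons_self).2
    refine ⟨K' + K, by simp [hK, hK'], fun u v hu hv => ?_⟩
    simp only [List.map_cons, List.sum_cons, add_mul]
    have hc : Continuous fun x =>
        (T.map fun p => iterPderiv p.1 u x * iterPderiv p.2 v x).sum :=
      continuous_list_sum T fun p _ =>
        (hu.iterPderiv p.1).continuous.mul (hv.iterPderiv p.2).continuous
    exact (eLpNorm_add_le
      ((hu.iterPderiv p.1).mul (hv.iterPderiv p.2)).continuous.aestronglyMeasurable
      hc.aestronglyMeasurable (by norm_num)).trans (add_le_add (h' u v hu hv) (h u v hu hv))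

lemma exists_eLpNorm_commutator_le {s : ℕ} (L : List (Fin d)) (hL : L.length ≤ s) :
    ∃ K : ℝ≥0∞, K ≠ ⊤ ∧ ∀ u v : EuclideanSpace ℝ (Fin d) → ℝ,
      SmoothPeriodic u → SmoothPeriodic v →
      eLpNorm (fun x => iterPderiv L (fun y => u y * v y) x - u x * iterPderiv L v x) 2
          (volume.restrict (TorusDomain d)) ≤
        K * (eLpNorm (fderiv ℝ u) ⊤ (volume.restrict (TorusDomain d)) * lpSup v 2 (s - 1) +
          eLpNorm v ⊤ (volume.restrict (TorusDomain d)) * lpSup u 2 s) := by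
  obtain ⟨T, hT, h⟩ := exists_commutator_terms L
  obtain ⟨K, hK, hle⟩ := exists_eLpNorm_sum_terms_le (s := s) T
    fun p hp => ⟨(hT p hp).1, (hT p hp).2.trans_le hL⟩
  refine ⟨K, hK, fun u v hu hv => ?_⟩
  simp only [h u v hu hv, add_sub_cancel_left]
  exact hle u v hu hv

lemma exists_eLpNorm_iteratedFDeriv_commutator_le (d : ℕ) {s k : ℕ} (hk : k ≤ s) :
    ∃ K : ℝ≥0∞, K ≠ ⊤ ∧ ∀ u v : EuclideanSpace ℝ (Fin d) → ℝ,
      SmoothPeriodic u → SmoothPeriodic v →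
      eLpNorm (fun x => iteratedFDeriv ℝ k (fun y => u y * v y) x - u x • iteratedFDeriv ℝ k v x) 2
          (volume.restrict (TorusDomain d)) ≤
        K * (eLpNorm (fderiv ℝ u) ⊤ (volume.restrict (TorusDomain d)) * lpSup v 2 (s - 1) +
          eLpNorm v ⊤ (volume.restrict (TorusDomain d)) * lpSup u 2 s) := by
  choose K hK h using fun I : Fin k → Fin d =>
    exists_eLpNorm_commutator_le (s := s) (List.ofFn I) (by simpa using hk)
  refine ⟨∑ I, K I, ENNReal.sum_ne_top.2 fun I _ => hK I, fun u v hu hv => ?_⟩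
  have hcont : ∀ I : Fin k → Fin d, Continuous fun x =>
      iterPderiv (List.ofFn I) (fun y => u y * v y) x - u x * iterPderiv (List.ofFn I) v x :=
    fun I => ((hu.mul hv).iterPderiv _).continuous.sub
      (hu.continuous.mul (hv.iterPderiv _).continuous)
  refine (eLpNorm_mono_real (g := ∑ I : Fin k → Fin d, fun x =>
    ‖iterPderiv (List.ofFn I) (fun y => u y * v y) x - u x * iterPderiv (List.ofFn I) v x‖)
    fun x => ?_).trans ?_
  · refine (norm_le_sum_unitVec _).trans_eq ?_
    rw [Finset.sum_apply]
    refine Finset.sum_congr rfl fun I _ => ?_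
    rw [← iteratedFDeriv_apply_unitVec (hu.mul hv), ← iteratedFDeriv_apply_unitVec hv]
    rfl
  · refine (eLpNorm_sum_le (fun I _ => (hcont I).norm.aestronglyMeasurable) (by norm_num)).trans ?_
    rw [Finset.sum_mul]
    refine Finset.sum_le_sum fun I _ => ?_
    rw [eLpNorm_norm]
    exact h I u v hu hv

end Torus

/-- Moser-type commutator estimate:
`‖∂^α(uv) - u ∂^α v‖_{L²} ≤ c(s,d)(‖∇u‖_∞ ‖∇^{s-1} v‖_{L²} + ‖v‖_∞ ‖∇^s u‖_{L²})`
for all multi-indices `|α| ≤ s`, for (smooth, periodic) functions on the torus `𝕋ᵈ`. -/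
theorem moser_commutator_estimate (s d : ℕ) (hs : 0 < s) (hd : 0 < d) :
    ∃ c : ℝ≥0∞, 0 < c ∧ c ≠ ⊤ ∧
      ∀ u v : EuclideanSpace ℝ (Fin d) → ℝ,
        ContDiff ℝ (⊤ : ℕ∞) u → ContDiff ℝ (⊤ : ℕ∞) v → IsTorusPeriodic u → IsTorusPeriodic v →
        ∀ k ≤ s,
          eLpNorm
              (fun x => iteratedFDeriv ℝ k (fun y => u y * v y) x
                 - u x • iteratedFDeriv ℝ k v x) 2
              (volume.restrict (TorusDomain d)) ≤
            c * (eLpNorm (fderiv ℝ u) ⊤ (volume.restrict (TorusDomain d)) *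
                   eLpNorm (iteratedFDeriv ℝ (s - 1) v) 2 (volume.restrict (TorusDomain d)) +
                 eLpNorm v ⊤ (volume.restrict (TorusDomain d)) *
                   eLpNorm (iteratedFDeriv ℝ s u) 2 (volume.restrict (TorusDomain d))) := by
  choose K hK h using fun k : Fin (s + 1) =>
    Torus.exists_eLpNorm_iteratedFDeriv_commutator_le d (s := s) (k := k) (by omega)
  refine ⟨1 + ∑ k, K k, by simp, by simpa using hK, ?_⟩
  intro u v hu hv pu pv k hk
  have hu' : Torus.SmoothPeriodic u := ⟨hu, pu⟩
  have hv' : Torus.SmoothPeriodic v := ⟨hv, pv⟩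
  refine (h ⟨k, by omega⟩ u v hu' hv').trans ?_
  gcongr
  · exact (Finset.single_le_sum (f := K) (fun _ _ => zero_le) (Finset.mem_univ _)).trans
      le_add_self
  · exact Torus.lpSup_le_eLpNorm_iteratedFDeriv hv' 2 (s - 1)
  · exact Torus.lpSup_le_eLpNorm_iteratedFDeriv hu' 2 s
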